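/- arXiv:1008.4210 — 2 statements merged into one kernel-verified Lean document; each statement's English description precedes it below -/
import Mathlib

section
/- Let G be an interval graph with a fixed interval representation, and let A be a dominating set of G of minimum cardinality. Then every vertex v ∉ A is adjacent to at most five vertices of A. -/
/-!
Let `N` be the set of neighbours of `v` in the minimum dominating set `A`, and let `l`, `r` be the
members of `N` whose intervals reach furthest to the left and to the right. Every interval of a
member of `N` meets that of `v`, so it is covered by the intervals of `v`, `l` and `r`. Hence
`(A \ N) ∪ {v, l, r}` is still dominating, and minimality of `A` gives `|N| ≤ 3`.
-/

section OrdConnected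

variable {ι α : Type*} [LinearOrder α]

theorem exists_biUnion_subset_of_ordConnected {s : Set ι} (hs : s.Finite) (hne : s.Nonempty)
    {I : ι → Set α} {J : Set α} (hI : ∀ i ∈ s, (I i).OrdConnected) (hJ : J.OrdConnected)
    (hIJ : ∀ i ∈ s, (I i ∩ J).Nonempty) :
    ∃ l ∈ s, ∃ r ∈ s, ⋃ i ∈ s, I i ⊆ J ∪ (I l ∪ I r) := by
  -- Without endpoints to compare, reaching furthest left means having the largest upper closure,
  -- which is the least one since `UpperSet` is ordered by reverse inclusion.
  obtain ⟨l, hl, l_leftmost⟩ := s.exists_min_image (fun i => upperClosure (I i)) hs hne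
  obtain ⟨r, hr, r_rightmost⟩ := s.exists_max_image (fun i => lowerClosure (I i)) hs hne
  obtain ⟨y, hyl, hyJ⟩ := hIJ l hl
  obtain ⟨z, hzr, hzJ⟩ := hIJ r hr
  refine ⟨l, hl, r, hr, Set.iUnion₂_subset fun i hi x hx => ?_⟩
  obtain ⟨p, hpl, hpx⟩ : x ∈ upperClosure (I l) := l_leftmost i hi (subset_upperClosure hx)
  obtain ⟨q, hqr, hxq⟩ : x ∈ lowerClosure (I r) := r_rightmost i hi (subset_lowerClosure hx)
  rcases le_total x y with hxy | hyx
  · exact .inr (.inl ((hI l hl).out hpl hyl ⟨hpx, hxy⟩))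
  rcases le_total z x with hzx | hxz
  · exact .inr (.inr ((hI r hr).out hzr hqr ⟨hzx, hxq⟩))
  · exact .inl (hJ.out hyJ hzJ ⟨hyx, hxz⟩)

end OrdConnected

theorem encard_triple_le {α : Type*} (x y z : α) : ({x, y, z} : Set α).encard ≤ 3 := by
  classical
  have htriple : ({x, y, z} : Set α) = ({x, y, z} : Finset α) := by simp
  rw [htriple, Set.encard_coe_eq_coe_finsetCard]
  exact_mod_cast Finset.card_le_three

section Domination

variable {V : Type*} {G : SimpleGraph V} {A N T : Set V}

/-- The vertex `v` is dominated by `S`: its closed neighbourhood in `G` meets `S`. -/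
def IsDominatedBy (G : SimpleGraph V) (S : Set V) (v : V) : Prop :=
  v ∈ S ∨ ∃ u ∈ S, G.Adj v u

/-- `S` is a dominating set of `G`. -/
def IsDominatingSet (G : SimpleGraph V) (S : Set V) : Prop :=
  ∀ v, IsDominatedBy G S v

/-- `A` is a dominating set of `G` of minimum cardinality. Cardinalities are taken in `ℕ∞`, so
that infinite competitors do not count as having size `0`. -/
structure IsMinimumDominatingSet (G : SimpleGraph V) (A : Set V) : Prop where
  isDominatingSet : IsDominatingSet G A
  encard_le : ∀ S, IsDominatingSet G S → A.encard ≤ S.encard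

theorem IsDominatingSet.sdiff_union (hA : IsDominatingSet G A)
    (hT : ∀ u ∈ N, ∀ w, w = u ∨ G.Adj w u → IsDominatedBy G T w) :
    IsDominatingSet G (A \ N ∪ T) := by
  intro w
  obtain ⟨u, huA, hwu⟩ : ∃ u ∈ A, w = u ∨ G.Adj w u := by
    rcases hA w with hw | ⟨u, hu, hwu⟩
    · exact ⟨w, hw, .inl rfl⟩
    · exact ⟨u, hu, .inr hwu⟩
  by_cases huN : u ∈ N
  · exact (hT u huN w hwu).imp .inr fun ⟨t, ht, hwt⟩ => ⟨t, .inr ht, hwt⟩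
  · rcases hwu with rfl | hwu
    · exact .inl (.inl ⟨huA, huN⟩)
    · exact .inr ⟨u, .inl ⟨huA, huN⟩, hwu⟩

theorem IsMinimumDominatingSet.encard_le_of_sdiff_union (hA : IsMinimumDominatingSet G A)
    (hfin : A.Finite) (hNA : N ⊆ A) (hT : IsDominatingSet G (A \ N ∪ T)) :
    N.encard ≤ T.encard := by
  have hle : (A \ N).encard + N.encard ≤ (A \ N).encard + T.encard :=
    calc (A \ N).encard + N.encard = A.encard := Set.encard_sdiff_add_encard_of_subset hNA
      _ ≤ (A \ N ∪ T).encard := hA.encard_le _ hT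
      _ ≤ (A \ N).encard + T.encard := Set.encard_union_le _ _
  exact (ENat.add_le_add_iff_left hfin.sdiff.encard_lt_top.ne).mp hle

end Domination

section IntersectionGraph

variable {V α : Type*} {G : SimpleGraph V} {I : V → Set α} {T : Set V} {u w : V}

/-- `G` is the intersection graph of the family `I`. An interval representation of `G` is such a
family whose members are order-connected subsets of a linear order. -/
def IsIntersectionRepresentation (G : SimpleGraph V) (I : V → Set α) : Prop :=
  ∀ u v, G.Adj u v ↔ u ≠ v ∧ (I u ∩ I v).Nonempty

namespace IsIntersectionRepresentation

theorem isDominatedBy_of_nonempty_inter (hG : IsIntersectionRepresentation G I)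
    (hw : (I w ∩ ⋃ t ∈ T, I t).Nonempty) : IsDominatedBy G T w := by
  obtain ⟨x, hxw, hx⟩ := hw
  obtain ⟨t, ht, hxt⟩ := Set.mem_iUnion₂.mp hx
  by_cases hwt : w = t
  · exact .inl (hwt ▸ ht)
  · exact .inr ⟨t, ht, (hG w t).mpr ⟨hwt, x, hxw, hxt⟩⟩

theorem isDominatedBy_of_subset_biUnion (hG : IsIntersectionRepresentation G I)
    (hu : (I u).Nonempty) (huT : I u ⊆ ⋃ t ∈ T, I t) (hwu : w = u ∨ G.Adj w u) :
    IsDominatedBy G T w := by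
  have hmeet : (I w ∩ I u).Nonempty := by
    rcases hwu with rfl | hwu
    · rwa [Set.inter_self]
    · exact ((hG w u).mp hwu).2
  exact hG.isDominatedBy_of_nonempty_inter (hmeet.mono (Set.inter_subset_inter_right _ huT))

end IsIntersectionRepresentation

end IntersectionGraph

theorem stmt_4_general {V α : Type*} [LinearOrder α] {G : SimpleGraph V} {I : V → Set α}
    (hI : ∀ v, (I v).OrdConnected) (hG : IsIntersectionRepresentation G I)
    {A : Set V} (hfin : A.Finite) (hA : IsMinimumDominatingSet G A) (v : V) :
    {u ∈ A | G.Adj v u}.encard ≤ 3 := by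
  set N := {u ∈ A | G.Adj v u}
  have hNA : N ⊆ A := Set.sep_subset _ _
  have hNv : ∀ u ∈ N, (I u ∩ I v).Nonempty := fun u hu => ((hG u v).mp hu.2.symm).2
  rcases N.eq_empty_or_nonempty with hN | hN
  · simp [hN]
  obtain ⟨l, -, r, -, hcover⟩ := exists_biUnion_subset_of_ordConnected (hfin.subset hNA) hN
    (fun u _ => hI u) (hI v) hNv
  have hsub : ∀ u ∈ N, I u ⊆ ⋃ t ∈ ({v, l, r} : Set V), I t := fun u hu => by
    simpa only [Set.biUnion_insert, Set.biUnion_singleton] using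
      (Set.subset_biUnion_of_mem hu).trans hcover
  have hdom : IsDominatingSet G (A \ N ∪ {v, l, r}) :=
    hA.isDominatingSet.sdiff_union fun u hu _ =>
      hG.isDominatedBy_of_subset_biUnion (hNv u hu).left (hsub u hu)
  calc N.encard ≤ ({v, l, r} : Set V).encard := hA.encard_le_of_sdiff_union hfin hNA hdom
    _ ≤ 3 := encard_triple_le v l r

/-- In an interval graph with a fixed representation, every vertex outside
a minimum dominating set `A` is adjacent to at most five vertices of `A`. -/
theorem stmt_4
    {V : Type*} [Fintype V] (G : SimpleGraph V)
    (a b : V → ℝ) (hab : ∀ v, a v < b v)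
    (hadj : ∀ u v : V, G.Adj u v ↔
      u ≠ v ∧ (Set.Icc (a u) (b u) ∩ Set.Icc (a v) (b v)).Nonempty)
    (A : Set V)
    (hdom : ∀ v : V, v ∈ A ∨ ∃ u ∈ A, G.Adj v u)
    (hmin : ∀ S : Set V, (∀ v : V, v ∈ S ∨ ∃ u ∈ S, G.Adj v u) → A.ncard ≤ S.ncard) :
    ∀ v ∉ A, ({u ∈ A | G.Adj v u}).ncard ≤ 5 := by
  intro v _
  have hA : IsMinimumDominatingSet G A := ⟨hdom, fun S hS => by
    simpa only [← A.toFinite.cast_ncard_eq, ← S.toFinite.cast_ncard_eq, Nat.cast_le] using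
      hmin S hS⟩
  have hle := stmt_4_general (I := fun v => Set.Icc (a v) (b v)) (fun _ => Set.ordConnected_Icc)
    hadj A.toFinite hA v
  exact (Set.encard_le_coe_iff_finite_ncard_le.mp hle).2.trans (by norm_num)
end

section
/- Let G be an interval graph with a fixed interval representation on n ≥ 1 vertices, let δ be the minimum degree of G, and let γ be the minimum cardinality of a dominating set of G. Then γ ≤ √(5n) or δ + 1 ≤ √(5n). -/
/-!
In an interval graph, a greedy sweep finds a dominating set no larger than some packing, a set of
vertices with pairwise disjoint closed neighbourhoods. Let `u` have the leftmost right endpoint of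
the vertices still to be dominated, and let `w` have the rightmost right endpoint in the closed
neighbourhood of `u`. A remaining vertex that misses `w` starts to the right of `w`, hence to the
right of every neighbour of `u`, so its closed neighbourhood is disjoint from that of `u`. Put `w`
into the dominating set and `u` into the packing, and repeat.

The closed neighbourhoods of the packing have at least `δ + 1` elements each, so `γ * (δ + 1) ≤ n`
and the smaller factor is even at most `√n`.
-/

section Graph

variable {V : Type*} {G : SimpleGraph V}

/-- The closed neighbourhood `N[v]` of a vertex. -/
def closedNeighborSet (G : SimpleGraph V) (v : V) : Set V :=
  insert v (G.neighborSet v)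

/-- A dominating set: every vertex lies in `S` or has a neighbour in `S`. -/
def IsDominating (G : SimpleGraph V) (S : Set V) : Prop :=
  ∀ v, v ∈ S ∨ ∃ u ∈ S, G.Adj v u

/-- A packing (also called a 2-packing): the closed neighbourhoods of the vertices of `P` are
pairwise disjoint. The size of a packing bounds that of every dominating set from below. -/
def IsPacking (G : SimpleGraph V) (P : Set V) : Prop :=
  P.PairwiseDisjoint (closedNeighborSet G)

/-- A step of the greedy algorithm on the set `U` of vertices still to be dominated: `w` dominates
every vertex of `U` at distance at most two from `u`. After adding `w` to the dominating set, each
remaining vertex is far enough from `u` for the two to lie in a common packing. -/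
def IsGreedyStep (G : SimpleGraph V) (U : Set V) (u w : V) : Prop :=
  ∀ x ∈ U, x ∈ closedNeighborSet G w ∨ Disjoint (closedNeighborSet G u) (closedNeighborSet G x)

theorem mem_closedNeighborSet {u v : V} : u ∈ closedNeighborSet G v ↔ u = v ∨ G.Adj v u :=
  Iff.rfl

theorem self_mem_closedNeighborSet (v : V) : v ∈ closedNeighborSet G v :=
  Set.mem_insert v _

theorem ncard_closedNeighborSet [Finite V] (v : V) :
    (closedNeighborSet G v).ncard = (G.neighborSet v).ncard + 1 :=
  Set.ncard_insert_of_notMem G.notMem_neighborSet_self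

theorem isDominating_iff_exists_mem_closedNeighborSet {S : Set V} :
    IsDominating G S ↔ ∀ v, ∃ s ∈ S, v ∈ closedNeighborSet G s := by
  refine forall_congr' fun v => ?_
  simp only [mem_closedNeighborSet, and_or_left, exists_or, exists_eq_right', G.adj_comm v]

theorem IsPacking.card_mul_le [Fintype V] {P : Finset V} (hP : IsPacking G P) {k : ℕ}
    (hk : ∀ v ∈ P, k ≤ (closedNeighborSet G v).ncard) : P.card * k ≤ Fintype.card V := by
  classical
  calc P.card * k
      ≤ ∑ v ∈ P, (closedNeighborSet G v).toFinset.card :=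
        P.card_nsmul_le_sum _ _ fun v hv => by
          simpa only [Set.ncard_eq_toFinset_card'] using hk v hv
    _ = (P.biUnion fun v => (closedNeighborSet G v).toFinset).card :=
        (Finset.card_biUnion fun u hu v hv huv => Set.disjoint_toFinset.2 (hP hu hv huv)).symm
    _ ≤ Fintype.card V := Finset.card_le_univ _

theorem exists_isPacking_card_le_of_forall_exists_isGreedyStep
    (hG : ∀ U : Finset V, U.Nonempty → ∃ u ∈ U, ∃ w, IsGreedyStep G U u w) (U : Finset V) :
    ∃ P ⊆ U, ∃ S : Finset V, IsPacking G P ∧ S.card ≤ P.card ∧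
      ∀ x ∈ U, ∃ s ∈ S, x ∈ closedNeighborSet G s := by
  classical
  induction U using Finset.strongInduction with
  | H U ih =>
    obtain rfl | hU := U.eq_empty_or_nonempty
    · exact ⟨∅, subset_rfl, ∅, by simp [IsPacking]⟩
    obtain ⟨u, huU, w, hw⟩ := hG U hU
    let far := U.filter fun x => Disjoint (closedNeighborSet G u) (closedNeighborSet G x)
    have hu_far : u ∉ far := fun hu =>
      Set.disjoint_left.1 (Finset.mem_filter.1 hu).2
        (self_mem_closedNeighborSet u) (self_mem_closedNeighborSet u)
    have hfar : far ⊂ U :=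
      (Finset.ssubset_iff_of_subset (Finset.filter_subset _ _)).2 ⟨u, huU, hu_far⟩
    obtain ⟨P, hPfar, S, hP, hSP, hS⟩ := ih far hfar
    refine ⟨insert u P, Finset.insert_subset huU (hPfar.trans hfar.subset), insert w S, ?_, ?_, ?_⟩
    · rw [IsPacking, Finset.coe_insert]
      exact hP.insert fun x hx _ => (Finset.mem_filter.1 (hPfar hx)).2
    · rw [Finset.card_insert_of_notMem fun hu => hu_far (hPfar hu)]
      exact (Finset.card_insert_le w S).trans (Nat.add_le_add_right hSP 1)
    · intro x hx
      obtain hxw | hxu := hw x hx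
      · exact ⟨w, Finset.mem_insert_self w S, hxw⟩
      · obtain ⟨s, hs, hxs⟩ := hS x (Finset.mem_filter.2 ⟨hx, hxu⟩)
        exact ⟨s, Finset.mem_insert_of_mem hs, hxs⟩

end Graph

/-- The closed intervals `[a v, b v]`, none of them empty, represent `G` as an interval graph.
The endpoints may lie in any linear order, and an interval may consist of a single point. -/
structure IsIntervalRep {V α : Type*} [LinearOrder α] (G : SimpleGraph V) (a b : V → α) :
    Prop where
  le (v : V) : a v ≤ b v
  adj_iff (u v : V) : G.Adj u v ↔ u ≠ v ∧ (Set.Icc (a u) (b u) ∩ Set.Icc (a v) (b v)).Nonempty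

namespace IsIntervalRep

variable {V α : Type*} [LinearOrder α] {G : SimpleGraph V} {a b : V → α}

theorem mem_closedNeighborSet_iff (h : IsIntervalRep G a b) {u v : V} :
    u ∈ closedNeighborSet G v ↔ a u ≤ b v ∧ a v ≤ b u := by
  obtain rfl | huv := eq_or_ne u v
  · simp [self_mem_closedNeighborSet, h.le]
  · simp [mem_closedNeighborSet, h.adj_iff, Set.Icc_inter_Icc, h.le, huv, huv.symm]

theorem exists_isGreedyStep [Finite V] (h : IsIntervalRep G a b) {U : Set V} (hU : U.Nonempty) :
    ∃ u ∈ U, ∃ w, IsGreedyStep G U u w := by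
  obtain ⟨u, huU, hu_min⟩ := U.exists_min_image b (Set.toFinite _) hU
  obtain ⟨w, hwu, hw_max⟩ := (closedNeighborSet G u).exists_max_image b (Set.toFinite _)
    ⟨u, self_mem_closedNeighborSet u⟩
  refine ⟨u, huU, w, fun x hx => ?_⟩
  obtain hxw | hlt := le_or_gt (a x) (b w)
  · have hwx : a w ≤ b x := (h.mem_closedNeighborSet_iff.1 hwu).1.trans (hu_min x hx)
    exact .inl (h.mem_closedNeighborSet_iff.2 ⟨hxw, hwx⟩)
  · refine .inr (Set.disjoint_left.2 fun y hyu hyx => hlt.not_ge ?_)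
    exact (h.mem_closedNeighborSet_iff.1 hyx).2.trans (hw_max y hyu)

theorem exists_isDominating_isPacking_card_le [Finite V] (h : IsIntervalRep G a b) :
    ∃ S P : Finset V, IsDominating G S ∧ IsPacking G P ∧ S.card ≤ P.card := by
  have := Fintype.ofFinite V
  obtain ⟨P, -, S, hP, hSP, hS⟩ := exists_isPacking_card_le_of_forall_exists_isGreedyStep
    (fun _ hU => h.exists_isGreedyStep hU) Finset.univ
  exact ⟨S, P, isDominating_iff_exists_mem_closedNeighborSet.2 fun v => hS v (Finset.mem_univ v),
    hP, hSP⟩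

end IsIntervalRep

theorem le_sqrt_or_le_sqrt_of_mul_le {x y c : ℝ} (h : x * y ≤ c) : x ≤ √c ∨ y ≤ √c := by
  by_contra! hlt
  obtain ⟨hx, hy⟩ := hlt
  have hlt_sq : √c * √c < x * y := mul_lt_mul'' hx hy c.sqrt_nonneg c.sqrt_nonneg
  have hc_le : c ≤ √c * √c := sq √c ▸ (Real.sqrt_le_left c.sqrt_nonneg).1 le_rfl
  exact hc_le.not_gt (hlt_sq.trans_le h)

theorem stmt_7_general {V α : Type*} [Fintype V] [LinearOrder α] {G : SimpleGraph V}
    {a b : V → α} (h : IsIntervalRep G a b) {δ γ : ℕ}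
    (hδ : IsLeast (Set.range fun v : V => (G.neighborSet v).ncard) δ)
    (hγ : IsLeast {k : ℕ | ∃ S : Set V, IsDominating G S ∧ S.ncard = k} γ) :
    γ * (δ + 1) ≤ Fintype.card V := by
  obtain ⟨S, P, hS, hP, hSP⟩ := h.exists_isDominating_isPacking_card_le
  have hγP : γ ≤ P.card := (hγ.2 ⟨S, hS, Set.ncard_coe_finset S⟩).trans hSP
  have hδN (v : V) : δ + 1 ≤ (closedNeighborSet G v).ncard := by
    rw [ncard_closedNeighborSet]
    exact Nat.add_le_add_right (hδ.2 ⟨v, rfl⟩) 1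
  exact (Nat.mul_le_mul_right _ hγP).trans (hP.card_mul_le fun v _ => hδN v)

/-- For an interval graph on `n ≥ 1` vertices with minimum degree `δ` and
domination number `γ`, either `γ ≤ √(5n)` or `δ + 1 ≤ √(5n)`. -/
theorem stmt_7
    {V : Type*} [Fintype V] (G : SimpleGraph V)
    (a b : V → ℝ) (hab : ∀ v, a v < b v)
    (hadj : ∀ u v : V, G.Adj u v ↔
      u ≠ v ∧ (Set.Icc (a u) (b u) ∩ Set.Icc (a v) (b v)).Nonempty)
    (hn : 1 ≤ Fintype.card V)
    (δ : ℕ) (hδ : IsLeast (Set.range fun v : V => (G.neighborSet v).ncard) δ)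
    (γ : ℕ)
    (hγ : IsLeast {k : ℕ | ∃ S : Set V,
      (∀ v : V, v ∈ S ∨ ∃ u ∈ S, G.Adj v u) ∧ S.ncard = k} γ) :
    (γ : ℝ) ≤ Real.sqrt (5 * Fintype.card V) ∨
      (δ : ℝ) + 1 ≤ Real.sqrt (5 * Fintype.card V) := by
  have hle : γ * (δ + 1) ≤ Fintype.card V := stmt_7_general ⟨fun v => (hab v).le, hadj⟩ hδ hγ
  exact le_sqrt_or_le_sqrt_of_mul_le (mod_cast hle.trans (Nat.le_mul_of_pos_left _ (by norm_num)))
end
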